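/- arXiv:2008.07161 — 2 statements merged into one kernel-verified Lean document; each statement's English description precedes it below -/
import Mathlib

section
/- Let U ⊆ ℂ be a conjugate symmetric set and let F : U → 𝔎ₙ be any function. Then F_σ(κ) lies in the range of the embedding a ↦ 1 ⊗ₜ a of 𝔠ₙ into 𝔎ₙ for every κ ∈ U_σ if and only if F is a stem function, i.e. F(conj ζ) = χ(F(ζ)) for all ζ ∈ U. -/
open scoped TensorProduct

/-- The paravector `κ = x + ι v` in the Clifford algebra. -/
noncomputable def paravec {n : ℕ} (Q : QuadraticForm ℝ (EuclideanSpace ℝ (Fin n)))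
    (x : ℝ) (v : EuclideanSpace ℝ (Fin n)) : CliffordAlgebra Q :=
  algebraMap ℝ (CliffordAlgebra Q) x + CliffordAlgebra.ι Q v

/-- The eigenvalue `s₊(κ) = x + i‖v‖`. -/
noncomputable def sPlus {n : ℕ} (x : ℝ) (v : EuclideanSpace ℝ (Fin n)) : ℂ :=
  (x : ℂ) + ‖v‖ * Complex.I

/-- The eigenvalue `s₋(κ) = x - i‖v‖`. -/
noncomputable def sMinus {n : ℕ} (x : ℝ) (v : EuclideanSpace ℝ (Fin n)) : ℂ :=
  (x : ℂ) - ‖v‖ * Complex.I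

/-- The idempotent `ι₊(κ) = (1/2) • (1 - i • (1 ⊗ 𝔰_κ))` in the complexification. -/
noncomputable def iotaP {n : ℕ} (Q : QuadraticForm ℝ (EuclideanSpace ℝ (Fin n)))
    (v : EuclideanSpace ℝ (Fin n)) : ℂ ⊗[ℝ] CliffordAlgebra Q :=
  (1/2 : ℝ) • (1 - Complex.I • ((1 : ℂ) ⊗ₜ[ℝ] CliffordAlgebra.ι Q (‖v‖⁻¹ • v)))

/-- The idempotent `ι₋(κ) = (1/2) • (1 + i • (1 ⊗ 𝔰_κ))` in the complexification. -/
noncomputable def iotaM {n : ℕ} (Q : QuadraticForm ℝ (EuclideanSpace ℝ (Fin n)))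
    (v : EuclideanSpace ℝ (Fin n)) : ℂ ⊗[ℝ] CliffordAlgebra Q :=
  (1/2 : ℝ) • (1 + Complex.I • ((1 : ℂ) ⊗ₜ[ℝ] CliffordAlgebra.ι Q (‖v‖⁻¹ • v)))

/-- The conjugation `χ` of the complexification `𝔎ₙ = ℂ ⊗[ℝ] 𝔠ₙ`, determined by
`χ(λ ⊗ a) = (conj λ) ⊗ a`. -/
noncomputable def chi {n : ℕ} (Q : QuadraticForm ℝ (EuclideanSpace ℝ (Fin n))) :
    (ℂ ⊗[ℝ] CliffordAlgebra Q) →ₐ[ℝ] ℂ ⊗[ℝ] CliffordAlgebra Q :=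
  Algebra.TensorProduct.map Complex.conjAe.toAlgHom (AlgHom.id ℝ (CliffordAlgebra Q))

open Classical in
/-- The function `F_σ` induced on paravectors `(x, v)` by a `𝔎ₙ`-valued function `F`. -/
noncomputable def Fsig {n : ℕ} (Q : QuadraticForm ℝ (EuclideanSpace ℝ (Fin n)))
    (F : ℂ → ℂ ⊗[ℝ] CliffordAlgebra Q) (x : ℝ) (v : EuclideanSpace ℝ (Fin n)) :
    ℂ ⊗[ℝ] CliffordAlgebra Q :=
  if v = 0 then F x
  else F (sPlus x v) * iotaP Q v + F (sMinus x v) * iotaM Q v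

open Classical in
/-- The function `f_σ` induced on paravectors `(x, v)` by a complex-valued function `f`. -/
noncomputable def fsig {n : ℕ} (Q : QuadraticForm ℝ (EuclideanSpace ℝ (Fin n)))
    (f : ℂ → ℂ) (x : ℝ) (v : EuclideanSpace ℝ (Fin n)) :
    ℂ ⊗[ℝ] CliffordAlgebra Q :=
  if v = 0 then f x • 1
  else f (sPlus x v) • iotaP Q v + f (sMinus x v) • iotaM Q v

/-! Two facts about `F ↦ F_σ` give the theorem. First, it intertwines `χ` with the reflection
`F ↦ F* := χ ∘ F ∘ conj`, because conjugation exchanges `s₊` with `s₋` and `χ` exchanges `ι₊` with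
`ι₋`. Second, it is injective: `ι₊(κ)` and `ι₋(κ)` are complementary idempotents which trade places
under `v ↦ -v` while `s₊` and `s₋` stay put, so that `F(s₊(κ)) = F_σ(κ) ι₊(κ) + F_σ(κ̄) ι₋(κ)`,
where `κ̄ = x - ι v`. Since the embedded copy of `𝔠ₙ` is the fixed space of `χ`, the function `F_σ`
has values there iff `F*_σ = F_σ`, that is, iff `F* = F` on `U`. -/

section Complexification

variable {M : Type*} [AddCommMonoid M] [Module ℝ M]

theorem add_rTensor_conj_mem_range (z : ℂ ⊗[ℝ] M) :
    z + Complex.conjAe.toLinearMap.rTensor M z ∈ LinearMap.range (TensorProduct.mk ℝ ℂ M 1) := by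
  induction z with
  | zero => simp
  | tmul c m =>
    refine ⟨(2 * c.re) • m, ?_⟩
    have hc : (2 * c.re) • (1 : ℂ) = c + (starRingEnd ℂ) c := by
      rw [Complex.add_conj, Complex.real_smul, mul_one]
    calc (1 : ℂ) ⊗ₜ[ℝ] ((2 * c.re) • m) = (c + (starRingEnd ℂ) c) ⊗ₜ[ℝ] m := by
          rw [← TensorProduct.smul_tmul, hc]
      _ = c ⊗ₜ[ℝ] m + (starRingEnd ℂ) c ⊗ₜ[ℝ] m := TensorProduct.add_tmul ..
  | add z w hz hw =>
    rw [map_add, add_add_add_comm]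
    exact add_mem hz hw

theorem mem_range_one_tmul_iff {z : ℂ ⊗[ℝ] M} :
    z ∈ Set.range (fun m : M => (1 : ℂ) ⊗ₜ[ℝ] m) ↔
      Complex.conjAe.toLinearMap.rTensor M z = z := by
  constructor
  · rintro ⟨m, rfl⟩
    simp
  · intro hz
    have h_half : z = (1 / 2 : ℝ) • (z + Complex.conjAe.toLinearMap.rTensor M z) := by
      rw [hz]
      module
    rw [h_half]
    exact Submodule.smul_mem _ _ (add_rTensor_conj_mem_range z)

end Complexification

theorem mul_idempotent_add_mul_one_sub_eq {R : Type*} [Ring R] {e : R} (he : IsIdempotentElem e)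
    (a b : R) : (a * e + b * (1 - e)) * e + (a * (1 - e) + b * e) * (1 - e) = a := by
  simp only [add_mul, mul_assoc, he.eq, he.one_sub.eq, he.mul_one_sub_self, he.one_sub_mul_self,
    mul_zero, add_zero]
  rw [← mul_add, add_sub_cancel, mul_one]

theorem ι_inv_norm_smul_mul_self {E : Type*} [NormedAddCommGroup E] [NormedSpace ℝ E]
    (Q : QuadraticForm ℝ E) {v : E} (hv : v ≠ 0) (hQv : Q v = -‖v‖ ^ 2) :
    CliffordAlgebra.ι Q (‖v‖⁻¹ • v) * CliffordAlgebra.ι Q (‖v‖⁻¹ • v) = -1 := by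
  have hQ_unit : Q (‖v‖⁻¹ • v) = -1 := by
    have hv_norm : ‖v‖ ≠ 0 := norm_ne_zero_iff.mpr hv
    rw [QuadraticMap.map_smul, hQv, smul_eq_mul]
    field_simp
  rw [CliffordAlgebra.ι_sq_scalar, hQ_unit, map_neg, map_one]

section Eigenvalues

variable {n : ℕ} (x : ℝ) (v : EuclideanSpace ℝ (Fin n))

theorem sPlus_neg : sPlus x (-v) = sPlus x v := by
  rw [sPlus, sPlus, norm_neg]

theorem sMinus_neg : sMinus x (-v) = sMinus x v := by
  rw [sMinus, sMinus, norm_neg]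

theorem conj_sPlus : (starRingEnd ℂ) (sPlus x v) = sMinus x v := by
  simp [sPlus, sMinus, sub_eq_add_neg]

theorem conj_sMinus : (starRingEnd ℂ) (sMinus x v) = sPlus x v := by
  rw [← conj_sPlus, Complex.conj_conj]

theorem exists_eq_sPlus_or_eq_sMinus (n : ℕ) [NeZero n] (ζ : ℂ) :
    ∃ (x : ℝ) (v : EuclideanSpace ℝ (Fin n)), ζ = sPlus x v ∨ ζ = sMinus x v := by
  obtain ⟨v, hv⟩ := exists_norm_eq (EuclideanSpace ℝ (Fin n)) (abs_nonneg ζ.im)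
  refine ⟨ζ.re, v, ?_⟩
  rcases abs_choice ζ.im with h | h
  · left
    simp [sPlus, hv, h]
  · right
    simp [sMinus, hv, h]

end Eigenvalues

section Clifford

variable {n : ℕ} (Q : QuadraticForm ℝ (EuclideanSpace ℝ (Fin n)))

theorem chi_tmul (c : ℂ) (a : CliffordAlgebra Q) :
    chi Q (c ⊗ₜ[ℝ] a) = (starRingEnd ℂ) c ⊗ₜ[ℝ] a := rfl

theorem chi_involutive : Function.Involutive (chi Q) := by
  intro z
  induction z with
  | zero => simp only [map_zero]
  | tmul c a => rw [chi_tmul, chi_tmul, Complex.conj_conj]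
  | add z w hz hw => rw [map_add, map_add, hz, hw]

theorem mem_range_one_tmul_iff_chi_eq_self {z : ℂ ⊗[ℝ] CliffordAlgebra Q} :
    z ∈ Set.range (fun a : CliffordAlgebra Q => (1 : ℂ) ⊗ₜ[ℝ] a) ↔ chi Q z = z :=
  mem_range_one_tmul_iff

variable (v : EuclideanSpace ℝ (Fin n))

theorem chi_iotaP : chi Q (iotaP Q v) = iotaM Q v := by
  simp only [iotaP, iotaM, TensorProduct.smul_tmul', smul_eq_mul, mul_one, map_smul, map_sub,
    map_one, chi_tmul, Complex.conj_I, TensorProduct.neg_tmul, sub_neg_eq_add]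

theorem chi_iotaM : chi Q (iotaM Q v) = iotaP Q v := by
  rw [← chi_iotaP, chi_involutive]

theorem iotaP_neg : iotaP Q (-v) = iotaM Q v := by
  simp only [iotaP, iotaM, norm_neg, smul_neg, map_neg, TensorProduct.tmul_neg, sub_neg_eq_add]

theorem iotaM_neg : iotaM Q (-v) = iotaP Q v := by
  rw [← iotaP_neg, neg_neg]

theorem iotaM_eq_one_sub_iotaP : iotaM Q v = 1 - iotaP Q v := by
  rw [iotaM, iotaP]
  module

theorem isIdempotentElem_iotaP {v : EuclideanSpace ℝ (Fin n)} (hv : v ≠ 0)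
    (hQv : Q v = -‖v‖ ^ 2) : IsIdempotentElem (iotaP Q v) := by
  set j : ℂ ⊗[ℝ] CliffordAlgebra Q :=
    Complex.I • ((1 : ℂ) ⊗ₜ[ℝ] CliffordAlgebra.ι Q (‖v‖⁻¹ • v)) with hj
  have j_mul_j : j * j = 1 := by
    rw [hj, smul_mul_smul_comm, Complex.I_mul_I, Algebra.TensorProduct.tmul_mul_tmul,
      ι_inv_norm_smul_mul_self Q hv hQv, mul_one, TensorProduct.tmul_neg, neg_smul, one_smul,
      neg_neg, Algebra.TensorProduct.one_def]
  calc iotaP Q v * iotaP Q v = (1 / 4 : ℝ) • (1 - j - j + j * j) := by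
        rw [iotaP, ← hj, smul_mul_smul_comm, mul_sub, sub_mul, sub_mul, one_mul, mul_one, one_mul]
        module
    _ = iotaP Q v := by
        rw [j_mul_j, iotaP, ← hj]
        module

variable (F G : ℂ → ℂ ⊗[ℝ] CliffordAlgebra Q) (x : ℝ)

theorem Fsig_zero : Fsig Q F x 0 = F x := if_pos rfl

theorem Fsig_eq : Fsig Q F x v = F (sPlus x v) * iotaP Q v + F (sMinus x v) * iotaM Q v := by
  by_cases hv : v = 0
  · rw [hv, Fsig_zero, iotaM_eq_one_sub_iotaP]
    simp [sPlus, sMinus, mul_sub]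
  · exact if_neg hv

theorem Fsig_neg :
    Fsig Q F x (-v) = F (sPlus x v) * iotaM Q v + F (sMinus x v) * iotaP Q v := by
  rw [Fsig_eq, sPlus_neg, sMinus_neg, iotaP_neg, iotaM_neg]

theorem chi_Fsig : chi Q (Fsig Q F x v) = Fsig Q (chi Q ∘ F ∘ starRingEnd ℂ) x v := by
  simp only [Fsig_eq, map_add, map_mul, chi_iotaP, chi_iotaM, Function.comp_apply, conj_sPlus,
    conj_sMinus]
  exact add_comm _ _

theorem Fsig_mul_iotaP_add_Fsig_neg_mul_iotaM {v : EuclideanSpace ℝ (Fin n)}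
    (hQv : Q v = -‖v‖ ^ 2) :
    Fsig Q F x v * iotaP Q v + Fsig Q F x (-v) * iotaM Q v = F (sPlus x v) := by
  by_cases hv : v = 0
  · subst hv
    simp [Fsig_zero, iotaM_eq_one_sub_iotaP, ← mul_add, sPlus]
  · rw [Fsig_neg, Fsig_eq, iotaM_eq_one_sub_iotaP]
    exact mul_idempotent_add_mul_one_sub_eq (isIdempotentElem_iotaP Q hv hQv) _ _

theorem Fsig_comp_conj : Fsig Q (F ∘ starRingEnd ℂ) x v = Fsig Q F x (-v) := by
  rw [Fsig_neg, Fsig_eq, add_comm]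
  simp only [Function.comp_apply, conj_sPlus, conj_sMinus]

theorem Fsig_mul_iotaM_add_Fsig_neg_mul_iotaP {v : EuclideanSpace ℝ (Fin n)}
    (hQv : Q v = -‖v‖ ^ 2) :
    Fsig Q F x v * iotaM Q v + Fsig Q F x (-v) * iotaP Q v = F (sMinus x v) := by
  have h := Fsig_mul_iotaP_add_Fsig_neg_mul_iotaM Q (F ∘ starRingEnd ℂ) x hQv
  rw [Fsig_comp_conj, Fsig_comp_conj, neg_neg, Function.comp_apply, conj_sPlus] at h
  rwa [add_comm]

variable {Q F G} in
theorem forall_Fsig_eq_iff_eqOn [NeZero n]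
    (hQ : ∀ v : EuclideanSpace ℝ (Fin n), Q v = -‖v‖ ^ 2)
    {U : Set ℂ} (hU : ∀ ζ : ℂ, ζ ∈ U ↔ (starRingEnd ℂ) ζ ∈ U) :
    (∀ (x : ℝ) (v : EuclideanSpace ℝ (Fin n)), sPlus x v ∈ U → sMinus x v ∈ U →
        Fsig Q F x v = Fsig Q G x v) ↔ Set.EqOn F G U := by
  constructor
  · intro h ζ hζ
    obtain ⟨x, v, hζ_eq⟩ := exists_eq_sPlus_or_eq_sMinus n ζ
    obtain ⟨hp, hm⟩ : sPlus x v ∈ U ∧ sMinus x v ∈ U := by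
      have h_iff : sPlus x v ∈ U ↔ sMinus x v ∈ U := by rw [hU, conj_sPlus]
      rcases hζ_eq with rfl | rfl
      · exact ⟨hζ, h_iff.mp hζ⟩
      · exact ⟨h_iff.mpr hζ, hζ⟩
    have h_v : Fsig Q F x v = Fsig Q G x v := h x v hp hm
    have h_neg : Fsig Q F x (-v) = Fsig Q G x (-v) :=
      h x (-v) (by rwa [sPlus_neg]) (by rwa [sMinus_neg])
    rcases hζ_eq with rfl | rfl
    · simp only [← Fsig_mul_iotaP_add_Fsig_neg_mul_iotaM Q _ x (hQ v), h_v, h_neg]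
    · simp only [← Fsig_mul_iotaM_add_Fsig_neg_mul_iotaP Q _ x (hQ v), h_v, h_neg]
  · intro h x v hp hm
    rw [Fsig_eq, Fsig_eq, h hp, h hm]

end Clifford

/-- `F_σ(κ)` lies in the image of `𝔠ₙ → 𝔎ₙ`, `a ↦ 1 ⊗ a`, for every
`κ ∈ U_σ` if and only if `F` is a stem function on the conjugate symmetric set `U`. -/
theorem stmt7 {n : ℕ} (hn : 1 ≤ n)
    (Q : QuadraticForm ℝ (EuclideanSpace ℝ (Fin n)))
    (hQ : ∀ v : EuclideanSpace ℝ (Fin n), Q v = -‖v‖ ^ 2)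
    (U : Set ℂ) (hU : ∀ ζ : ℂ, ζ ∈ U ↔ (starRingEnd ℂ) ζ ∈ U)
    (F : ℂ → ℂ ⊗[ℝ] CliffordAlgebra Q) :
    (∀ (x : ℝ) (v : EuclideanSpace ℝ (Fin n)), sPlus x v ∈ U → sMinus x v ∈ U →
        Fsig Q F x v ∈ Set.range (fun a : CliffordAlgebra Q => (1 : ℂ) ⊗ₜ[ℝ] a)) ↔
      (∀ ζ ∈ U, F ((starRingEnd ℂ) ζ) = chi Q (F ζ)) := by
  have : NeZero n := ⟨by omega⟩
  simp only [mem_range_one_tmul_iff_chi_eq_self, chi_Fsig]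
  rw [forall_Fsig_eq_iff_eqOn hQ hU]
  exact forall₂_congr fun ζ _ => (chi_involutive Q).eq_iff
end

section
/- Let A be a unital associative real algebra (a Ring A with Algebra ℝ A), T ∈ A and λ ∈ ℂ. Then the element λ ⊗ₜ 1 − 1 ⊗ₜ T is a unit of the complexification ℂ ⊗[ℝ] A if and only if T² − (2 · λ.re) • T + (Complex.normSq λ) • 1 is a unit of A. (In the paper's terminology: the complex resolvent sets defined via the complexified operator and via the real quadratic T² − 2Re(λ)T + |λ|² coincide.) -/
open scoped TensorProduct

/-!
Write `μ` for the conjugate of `λ`. In `ℂ ⊗ A` the quadratic `T² - 2 Re(λ) T + |λ|²` factors into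
the commuting elements `λ - T` and `μ - T`, so it is a unit there iff both factors are. Conjugation
on `ℂ` induces a ring endomorphism of `ℂ ⊗ A` taking `λ - T` to `μ - T`, so one factor suffices.
Finally, an element of `A` invertible in `ℂ ⊗ A` is invertible in `A`: the real part `ℂ ⊗ A → A` is
a map of `A`-bimodules preserving `1`, so it sends one-sided inverses to one-sided inverses.
-/

section Slice

variable {R S A : Type*} [CommSemiring R] [Semiring S] [Algebra R S] [Semiring A] [Algebra R A]

/-- The slice map `φ ⊗ id : S ⊗ A → R ⊗ A ≃ A` of a linear functional `φ` on `S`. For `φ` the real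
part on `ℂ` it is the real part on the complexification of `A`. -/
noncomputable def leftSlice (φ : S →ₗ[R] R) : S ⊗[R] A →ₗ[R] A :=
  (TensorProduct.lid R A).toLinearMap ∘ₗ φ.rTensor A

@[simp]
theorem leftSlice_tmul (φ : S →ₗ[R] R) (z : S) (a : A) : leftSlice φ (z ⊗ₜ[R] a) = φ z • a := by
  simp [leftSlice]

theorem leftSlice_one_tmul_mul (φ : S →ₗ[R] R) (a : A) (x : S ⊗[R] A) :
    leftSlice φ ((1 : S) ⊗ₜ[R] a * x) = a * leftSlice φ x := by
  induction x using TensorProduct.induction_on with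
  | zero => simp
  | tmul z b => simp
  | add x y hx hy => simp only [mul_add, map_add, hx, hy]

theorem leftSlice_mul_one_tmul (φ : S →ₗ[R] R) (x : S ⊗[R] A) (a : A) :
    leftSlice φ (x * (1 : S) ⊗ₜ[R] a) = leftSlice φ x * a := by
  induction x using TensorProduct.induction_on with
  | zero => simp
  | tmul z b => simp
  | add x y hx hy => simp only [add_mul, map_add, hx, hy]

theorem leftSlice_one {φ : S →ₗ[R] R} (hφ : φ 1 = 1) : leftSlice φ (1 : S ⊗[R] A) = 1 := by
  rw [Algebra.TensorProduct.one_def, leftSlice_tmul, hφ, one_smul]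

theorem isUnit_one_tmul_iff {φ : S →ₗ[R] R} (hφ : φ 1 = 1) (a : A) :
    IsUnit ((1 : S) ⊗ₜ[R] a) ↔ IsUnit a := by
  refine ⟨fun h => ?_, fun h => h.map (Algebra.TensorProduct.includeRight : A →ₐ[R] S ⊗[R] A)⟩
  obtain ⟨x, hax, hxa⟩ := isUnit_iff_exists.1 h
  refine isUnit_iff_exists.2 ⟨leftSlice φ x, ?_, ?_⟩
  · rw [← leftSlice_one_tmul_mul, hax, leftSlice_one hφ]
  · rw [← leftSlice_mul_one_tmul, hxa, leftSlice_one hφ]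

end Slice

section Quadratic

variable {R B : Type*} [CommRing R] [Ring B] [Algebra R B] {a b t : B} {s p : R}

theorem commute_of_add_eq_algebraMap (hs : a + b = algebraMap R B s) (h : Commute a t) :
    Commute b t := by
  rw [eq_sub_of_add_eq' hs]
  exact (Algebra.commute_algebraMap_left s t).sub_left h

theorem sub_mul_sub_eq_quadratic (hs : a + b = algebraMap R B s) (hp : a * b = algebraMap R B p)
    (ht : Commute a t) : (a - t) * (b - t) = t ^ 2 - s • t + p • (1 : B) := by
  have hbt : b * t = t * b := commute_of_add_eq_algebraMap hs ht
  calc (a - t) * (b - t) = t ^ 2 - (a * t + t * b) + a * b := by noncomm_ring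
    _ = t ^ 2 - (a + b) * t + a * b := by rw [← hbt, add_mul]
    _ = t ^ 2 - s • t + p • (1 : B) := by
      rw [hs, hp, ← Algebra.smul_def, Algebra.algebraMap_eq_smul_one p]

theorem isUnit_quadratic_iff (hs : a + b = algebraMap R B s) (hp : a * b = algebraMap R B p)
    (ht : Commute a t) :
    IsUnit (t ^ 2 - s • t + p • (1 : B)) ↔ IsUnit (a - t) ∧ IsUnit (b - t) := by
  have hba : Commute b a := commute_of_add_eq_algebraMap hs (Commute.refl a)
  have hbt : Commute b t := commute_of_add_eq_algebraMap hs ht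
  have hcomm : Commute (a - t) (b - t) :=
    (hba.symm.sub_right ht).sub_left (hbt.symm.sub_right (Commute.refl t))
  rw [← sub_mul_sub_eq_quadratic hs hp ht, hcomm.isUnit_mul_iff]

end Quadratic

section BaseChange

variable {R S A : Type*} [CommRing R] [Ring S] [Algebra R S] [Ring A] [Algebra R A]

theorem isUnit_tmul_one_sub_one_tmul_map (σ : S →ₐ[R] S) {z : S} {T : A}
    (h : IsUnit (z ⊗ₜ[R] (1 : A) - (1 : S) ⊗ₜ[R] T)) :
    IsUnit (σ z ⊗ₜ[R] (1 : A) - (1 : S) ⊗ₜ[R] T) := by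
  simpa using h.map (Algebra.TensorProduct.map σ (AlgHom.id R A))

theorem isUnit_one_tmul_quadratic_iff {z w : S} {s p : R} (T : A)
    (hs : z + w = algebraMap R S s) (hp : z * w = algebraMap R S p) :
    IsUnit ((1 : S) ⊗ₜ[R] (T ^ 2 - s • T + p • (1 : A))) ↔
      IsUnit (z ⊗ₜ[R] (1 : A) - (1 : S) ⊗ₜ[R] T) ∧
        IsUnit (w ⊗ₜ[R] (1 : A) - (1 : S) ⊗ₜ[R] T) := by
  let ι : S →ₐ[R] S ⊗[R] A := Algebra.TensorProduct.includeLeft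
  let κ : A →ₐ[R] S ⊗[R] A := Algebra.TensorProduct.includeRight
  have hs' : ι z + ι w = algebraMap R (S ⊗[R] A) s := by rw [← map_add, hs, AlgHom.commutes]
  have hp' : ι z * ι w = algebraMap R (S ⊗[R] A) p := by rw [← map_mul, hp, AlgHom.commutes]
  have hcomm : Commute (ι z) (κ T) := (Commute.one_right z).tmul (Commute.one_left T)
  have hκ : κ (T ^ 2 - s • T + p • (1 : A)) = κ T ^ 2 - s • κ T + p • 1 := by
    simp only [map_add, map_sub, map_pow, map_smul, map_one]
  change IsUnit (κ _) ↔ IsUnit (ι z - κ T) ∧ IsUnit (ι w - κ T)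
  rw [hκ]
  exact isUnit_quadratic_iff hs' hp' hcomm

theorem stmt16_general {φ : S →ₗ[R] R} (hφ : φ 1 = 1) (σ : S →ₐ[R] S) (T : A) {z : S} {s p : R}
    (hs : z + σ z = algebraMap R S s) (hp : z * σ z = algebraMap R S p) :
    IsUnit (z ⊗ₜ[R] (1 : A) - (1 : S) ⊗ₜ[R] T) ↔ IsUnit (T ^ 2 - s • T + p • (1 : A)) := by
  rw [← isUnit_one_tmul_iff hφ (T ^ 2 - s • T + p • 1), isUnit_one_tmul_quadratic_iff T hs hp]
  exact ⟨fun h => ⟨h, isUnit_tmul_one_sub_one_tmul_map σ h⟩, And.left⟩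

end BaseChange

/-- for a unital real algebra `A`, `T ∈ A` and `λ ∈ ℂ`, the element
`λ ⊗ 1 - 1 ⊗ T` is a unit of the complexification `ℂ ⊗[ℝ] A` if and only if
`T² - 2Re(λ) T + |λ|² 1` is a unit of `A`. -/
theorem stmt16 (A : Type*) [Ring A] [Algebra ℝ A] (T : A) (lam : ℂ) :
    IsUnit (lam ⊗ₜ[ℝ] (1 : A) - (1 : ℂ) ⊗ₜ[ℝ] T) ↔
      IsUnit (T ^ 2 - (2 * lam.re) • T + (Complex.normSq lam) • (1 : A)) :=
  stmt16_general (φ := Complex.reLm) Complex.one_re (Complex.conjAe : ℂ →ₐ[ℝ] ℂ) T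
    (Complex.add_conj lam) (Complex.mul_conj lam)
end
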